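/- arXiv:1907.10525 — 2 statements merged into one kernel-verified Lean document; each statement's English description precedes it below -/
import Mathlib

section
/- Let (A, I) be a henselian pair. For every finite projective A/I-module P there exists a finite projective A-module M together with an isomorphism of A/I-modules M/IM ≅ P. (This is the surjectivity, on isomorphism classes, of the base-change map M ↦ M ⊗_A A/I; together with the injectivity statement it says that base change induces a bijection on isomorphism classes of finite projective modules over A and over A/I.) -/
open TensorProduct

section
variable {A F : Type*} [CommRing A] [CommRing F] [Algebra A F] (I : Ideal A)

theorem hp_cotangent (Δ : F) [Algebra.FormallyUnramified A (Localization.Away Δ)]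
    (σ : Localization.Away Δ →ₐ[A] A ⧸ I) (K : Ideal F)
    (hK : K = RingHom.ker (σ.comp (IsScalarTower.toAlgHom A F (Localization.Away Δ)))) :
    K ≤ I.map (algebraMap A F) ⊔ K * K := by
  set σ' := σ.comp (IsScalarTower.toAlgHom A F (Localization.Away Δ)) with hσ'
  set J := I.map (algebraMap A F) ⊔ K * K with hJ
  have hIK : I.map (algebraMap A F) ≤ K := by
    rw [Ideal.map_le_iff_le_comap, hK]
    intro x hx
    rw [Ideal.mem_comap, RingHom.mem_ker, AlgHom.commutes]
    exact Ideal.Quotient.eq_zero_iff_mem.mpr hx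
  have hJK : J ≤ K := sup_le hIK Ideal.mul_le_right
  let π : F →ₐ[A] F ⧸ J := Ideal.Quotient.mkₐ A J
  let ρ : F ⧸ J →ₐ[A] A ⧸ I := Ideal.Quotient.liftₐ J σ' (fun x hx => by
    have := hJK hx; rw [hK] at this; exact this)
  have hρ : ∀ x, ρ (π x) = σ' x := fun x => rfl
  have hnil : IsNilpotent (RingHom.ker (ρ : F ⧸ J →+* A ⧸ I)) := by
    refine ⟨2, ?_⟩
    rw [pow_two, Ideal.zero_eq_bot, eq_bot_iff, Ideal.mul_le]
    intro r hr s hs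
    obtain ⟨r, rfl⟩ := Ideal.Quotient.mk_surjective r
    obtain ⟨s, rfl⟩ := Ideal.Quotient.mk_surjective s
    have hr' : r ∈ K := by rw [hK]; exact hr
    have hs' : s ∈ K := by rw [hK]; exact hs
    rw [← map_mul, Ideal.mem_bot, Ideal.Quotient.eq_zero_iff_mem]
    exact Ideal.mem_sup_right (Ideal.mul_mem_mul hr' hs')
  have hΔ : IsUnit (σ' Δ) := (IsLocalization.Away.algebraMap_isUnit Δ).map σ
  have hloc : IsUnit (π Δ) := by
    obtain ⟨v, hv⟩ := hΔ.exists_right_inv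
    obtain ⟨v, rfl⟩ := Ideal.Quotient.mk_surjective v
    have h1 : π Δ * algebraMap A _ v - 1 ∈ RingHom.ker (ρ : F ⧸ J →+* A ⧸ I) := by
      rw [RingHom.mem_ker]
      simp only [RingHom.coe_coe, map_sub, map_mul, AlgHom.commutes, map_one, hρ]
      exact sub_eq_zero.mpr hv
    obtain ⟨k, hk⟩ := hnil
    have h2 : IsNilpotent (π Δ * algebraMap A _ v - 1) :=
      ⟨k, by simpa [hk] using Ideal.pow_mem_pow h1 k⟩
    have h3 := h2.isUnit_one_add
    rw [add_sub_cancel] at h3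
    exact isUnit_of_mul_isUnit_left h3
  let g₁ : Localization.Away Δ →ₐ[A] F ⧸ J := IsLocalization.Away.liftAlgHom (f := π) Δ hloc
  let ι : A ⧸ I →ₐ[A] F ⧸ J := Ideal.Quotient.liftₐ I (Algebra.ofId A _) (fun a ha => by
    change algebraMap A (F ⧸ J) a = 0
    rw [IsScalarTower.algebraMap_apply A F]
    exact Ideal.Quotient.eq_zero_iff_mem.mpr (Ideal.mem_sup_left (Ideal.mem_map_of_mem _ ha)))
  have hg₁ : ∀ x : F, g₁ (algebraMap F _ x) = π x := fun x => by
    simp [g₁]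
  have hext : g₁ = ι.comp σ := by
    refine Algebra.FormallyUnramified.lift_unique' ρ hnil _ _ ?_
    have h1 : (ρ.comp ι) = AlgHom.id A _ := Ideal.Quotient.algHom_ext A (by ext)
    rw [← AlgHom.comp_assoc, h1, AlgHom.id_comp]
    apply IsLocalization.algHom_ext (.powers Δ)
    ext x
    change ρ (g₁ (algebraMap F _ x)) = σ (algebraMap F _ x)
    rw [hg₁, hρ]; rfl
  intro x hx
  have h1 : g₁ (algebraMap F _ x) = 0 := by
    rw [hext]
    change ι (σ' x) = 0
    rw [hK] at hx
    rw [show σ' x = 0 from hx, map_zero]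
  rw [hg₁] at h1
  exact Ideal.Quotient.eq_zero_iff_mem.mp h1

theorem hp_theta [Module.Finite A F] (σ : F →ₐ[A] A ⧸ I)
    (h : RingHom.ker σ ≤ I.map (algebraMap A F) ⊔ RingHom.ker σ * RingHom.ker σ) :
    ∃ θ : F, θ - 1 ∈ RingHom.ker σ ∧ ∀ x ∈ RingHom.ker σ, θ * x ∈ I.map (algebraMap A F) := by
  set K := RingHom.ker σ with hK
  obtain ⟨n, x, hx⟩ := Module.Finite.exists_fin (R := A) (M := F)
  choose a ha using fun i => Ideal.Quotient.mk_surjective (σ (x i))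
  let N' : Ideal F := Ideal.span (Set.range fun i => x i - algebraMap A F (a i))
  have hN'K : N' ≤ K := by
    rw [Ideal.span_le]
    rintro _ ⟨i, rfl⟩
    rw [hK, SetLike.mem_coe, RingHom.mem_ker, map_sub, AlgHom.commutes, ← ha]
    exact sub_self _
  have hIK : I.map (algebraMap A F) ≤ K := by
    rw [Ideal.map_le_iff_le_comap, hK]
    intro x hx
    rw [Ideal.mem_comap, RingHom.mem_ker, AlgHom.commutes]
    exact Ideal.Quotient.eq_zero_iff_mem.mpr hx
  have hmod : ∀ y : F, ∃ c : A, y - algebraMap A F c ∈ N' := by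
    intro y
    have hy : y ∈ Submodule.span A (Set.range x) := hx ▸ Submodule.mem_top
    induction hy using Submodule.span_induction with
    | mem y hy => obtain ⟨i, rfl⟩ := hy; exact ⟨a i, Ideal.subset_span ⟨i, rfl⟩⟩
    | zero => exact ⟨0, by simp⟩
    | add y z _ _ hy hz =>
      obtain ⟨c, hc⟩ := hy; obtain ⟨d, hd⟩ := hz
      exact ⟨c + d, by rw [map_add, add_sub_add_comm]; exact add_mem hc hd⟩
    | smul r y _ hy =>
      obtain ⟨c, hc⟩ := hy
      refine ⟨r * c, ?_⟩
      rw [map_mul, Algebra.smul_def, ← mul_sub]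
      exact Ideal.mul_mem_left _ _ hc
  have hKN : K ≤ I.map (algebraMap A F) ⊔ N' := by
    intro y hy
    obtain ⟨c, hc⟩ := hmod y
    have h1 : algebraMap A F c ∈ K := by
      have := sub_mem hy (hN'K hc)
      simpa using this
    rw [hK, RingHom.mem_ker, AlgHom.commutes] at h1
    have h2 : c ∈ I := Ideal.Quotient.eq_zero_iff_mem.mp h1
    have := add_mem (Ideal.mem_sup_left (Ideal.mem_map_of_mem (algebraMap A F) h2))
      (Ideal.mem_sup_right hc)
    simpa using this
  obtain ⟨r, hr, hr'⟩ := Submodule.exists_sub_one_mem_and_smul_le_of_fg_of_le_sup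
    (I := K) (N := I.map (algebraMap A F)) (N' := N') (P := K)
    (Submodule.fg_span (Set.finite_range _)) hN'K (by
      refine h.trans (sup_le le_sup_left ?_)
      calc K * K ≤ K * (I.map (algebraMap A F) ⊔ N') := Ideal.mul_mono_right hKN
        _ = K * I.map (algebraMap A F) ⊔ K * N' := Ideal.mul_sup _ _ _
        _ ≤ _ := sup_le_sup Ideal.mul_le_right le_rfl)
  exact ⟨r, hr, fun x hx => hr' (Submodule.smul_mem_pointwise_smul x r K hx)⟩

end
section
variable {A F : Type*} [CommRing A] [CommRing F] [Algebra A F] (I : Ideal A)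
open Polynomial

theorem hp_charpoly (hI : I ≤ Ideal.jacobson ⊥) [Module.Finite A F] (σ : F →ₐ[A] A ⧸ I) (θ : F)
    (h1 : θ - 1 ∈ RingHom.ker σ)
    (h2 : ∀ x ∈ RingHom.ker σ, θ * x ∈ I.map (algebraMap A F)) :
    ∃ (χ : A[X]) (n : ℕ), χ.Monic ∧ aeval θ χ = 0 ∧
      χ.map (Ideal.Quotient.mk I) = (X - C 1) * X ^ n := by
  classical
  obtain ⟨n, x, hx⟩ := Module.Finite.exists_fin (R := A) (M := F)
  have hIm : ∀ y : F, y ∈ I.map (algebraMap A F) ↔ y ∈ I • (⊤ : Submodule A F) := fun y => by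
    rw [Ideal.smul_top_eq_map, Submodule.restrictScalars_mem]
  let b : Option (Fin n) → F := fun o => o.elim θ (fun i => (1 - θ) * x i)
  let d : Option (Fin n) → A := fun o => o.elim 1 (fun _ => 0)
  have hspan : (⊤ : Submodule A F) ≤ Submodule.span A (Set.range b) := by
    refine Submodule.le_of_le_smul_of_le_jacobson_bot (I := I) Module.Finite.fg_top hI ?_
    rw [← hx, Submodule.span_le]
    rintro _ ⟨i, rfl⟩
    obtain ⟨a, ha⟩ := Ideal.Quotient.mk_surjective (σ (x i))
    have hk : θ * (x i - algebraMap A F a) ∈ I • (⊤ : Submodule A F) := by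
      rw [← hIm]
      refine h2 _ ?_
      rw [RingHom.mem_ker, map_sub, AlgHom.commutes, ← ha]
      exact sub_self _
    have e : x i = (a • b none + b (some i)) + θ * (x i - algebraMap A F a) := by
      simp only [b, Option.elim, Algebra.smul_def]; ring
    rw [e, SetLike.mem_coe]
    refine add_mem (Submodule.mem_sup_left (add_mem (Submodule.smul_mem _ _ ?_) ?_))
      (Submodule.mem_sup_right ?_)
    · exact Submodule.subset_span ⟨_, rfl⟩
    · exact Submodule.subset_span ⟨_, rfl⟩
    · rwa [hx]
  have hθ : θ * (θ - 1) ∈ I.map (algebraMap A F) := h2 _ h1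
  have hb : ∀ o, θ * b o - d o • b o ∈ I • Submodule.span A (Set.range b) := by
    intro o
    rw [top_le_iff.mp hspan, ← hIm]
    cases o with
    | none =>
      convert hθ using 1
      simp only [b, d, Option.elim, one_smul]; ring
    | some i =>
      convert Ideal.mul_mem_right (- x i) _ hθ using 1
      simp only [b, d, Option.elim, zero_smul]; ring
  simp only [Submodule.mem_ideal_smul_span_iff_exists_sum] at hb
  choose c hcI hc using hb
  let c' : Matrix (Option (Fin n)) (Option (Fin n)) A := Matrix.of fun i j => c i j
  let M : Matrix (Option (Fin n)) (Option (Fin n)) A := Matrix.diagonal d + c'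
  refine ⟨M.charpoly, n, M.charpoly_monic, ?_, ?_⟩
  · let N : Matrix (Option (Fin n)) (Option (Fin n)) F :=
      Matrix.scalar _ θ - M.map (algebraMap A F)
    have hN : aeval θ M.charpoly = N.det := by
      rw [aeval_def, ← eval_map, ← Matrix.charpoly_map, Matrix.eval_charpoly]
    have hNb : N.mulVec b = 0 := by
      ext o
      have := hc o
      rw [Finsupp.sum_fintype _ _ (by simp)] at this
      simp only [N, M, Matrix.sub_mulVec, Pi.sub_apply, Pi.zero_apply]
      have e1 : (Matrix.scalar (Option (Fin n)) θ).mulVec b o = θ * b o := by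
        simp [Matrix.scalar_apply, Matrix.mulVec_diagonal]
      have e2 : ((Matrix.diagonal d + c').map (algebraMap A F)).mulVec b o =
          d o • b o + ∑ j, c o j • b j := by
        rw [Matrix.map_add _ (map_add _), Matrix.add_mulVec, Pi.add_apply,
          Matrix.diagonal_map (map_zero _), Matrix.mulVec_diagonal]
        simp [Matrix.mulVec, dotProduct, c', Algebra.smul_def]
      rw [e1, e2, this]; ring
    have hdet : ∀ o, N.det * b o = 0 := by
      intro o
      have : (N.adjugate * N).mulVec b = 0 := by
        rw [← Matrix.mulVec_mulVec, hNb, Matrix.mulVec_zero]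
      rw [Matrix.adjugate_mul, Matrix.smul_mulVec, Matrix.one_mulVec] at this
      simpa using congrFun this o
    rw [hN, ← mul_one N.det]
    have h1 : (1 : F) ∈ Submodule.span A (Set.range b) := hspan trivial
    generalize (1 : F) = y at h1
    induction h1 using Submodule.span_induction with
    | mem y hy => obtain ⟨o, rfl⟩ := hy; exact hdet o
    | zero => simp
    | add y z _ _ hy hz => rw [mul_add, hy, hz, add_zero]
    | smul r y _ hy => rw [mul_smul_comm, hy, smul_zero]
  · rw [← Matrix.charpoly_map]
    have : M.map (Ideal.Quotient.mk I) = Matrix.diagonal (fun o => Ideal.Quotient.mk I (d o)) := by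
      rw [Matrix.map_add _ (map_add _), Matrix.diagonal_map (map_zero _)]
      convert add_zero _
      ext i j
      exact Ideal.Quotient.eq_zero_iff_mem.mpr (hcI i j)
    rw [this, Matrix.charpoly_diagonal, Fintype.prod_option]
    simp [d]

theorem hp_eps [HenselianRing A I] [Module.Finite A F] (σ : F →ₐ[A] A ⧸ I) (θ : F)
    (h1 : θ - 1 ∈ RingHom.ker σ)
    (h2 : ∀ x ∈ RingHom.ker σ, θ * x ∈ I.map (algebraMap A F)) :
    ∃ ε : F, ε * ε = ε ∧ σ ε = 1 ∧ ∀ x ∈ RingHom.ker σ, ε * x ∈ I.map (algebraMap A F) := by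
  have hI : I ≤ Ideal.jacobson ⊥ := HenselianRing.jac
  have hlh := isLocalHom_of_le_jacobson_bot I hI
  obtain ⟨χ, n, hm, h0, hχ⟩ := hp_charpoly I hI σ θ h1 h2
  obtain ⟨a, ha, haI⟩ := HenselianRing.is_henselian (I := I) χ hm 1
    (by
      rw [← Ideal.Quotient.eq_zero_iff_mem, ← eval₂_at_apply, ← eval_map, hχ]; simp)
    (by
      rw [← eval₂_at_apply, ← eval_map, ← derivative_map, hχ]; simp)
  obtain ⟨q, hq⟩ : ∃ q, (X - C a) * q = χ := ⟨_, mul_divByMonic_eq_iff_isRoot.mpr ha⟩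
  have ha1 : Ideal.Quotient.mk I a = 1 := by
    rw [← map_one (Ideal.Quotient.mk I)]; exact Ideal.Quotient.eq.mpr haI
  have hqm : q.map (Ideal.Quotient.mk I) = X ^ n := by
    rw [← hq, Polynomial.map_mul, Polynomial.map_sub, map_X, map_C, ha1] at hχ
    exact (monic_X_sub_C (1 : A ⧸ I)).isRegular.left hχ
  have hau : IsUnit a := by
    apply IsUnit.of_map (Ideal.Quotient.mk I); rw [ha1]; exact isUnit_one
  have hqa1 : Ideal.Quotient.mk I (q.eval a) = 1 := by
    rw [← eval₂_at_apply, ← eval_map, hqm, ha1]; simp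
  have hqu : IsUnit (q.eval a) := by
    apply IsUnit.of_map (Ideal.Quotient.mk I); rw [hqa1]; exact isUnit_one
  obtain ⟨v, hv⟩ := hqu.exists_left_inv
  obtain ⟨w, hw⟩ := hau.exists_left_inv
  have hmul : ∀ p : A[X], aeval θ p * aeval θ q = algebraMap A F (p.eval a) * aeval θ q := by
    intro p
    obtain ⟨r, hr⟩ := X_sub_C_dvd_sub_C_eval (p := p) (a := a)
    have : aeval θ ((p - C (p.eval a)) * q) = 0 := by
      rw [hr, mul_right_comm, hq, map_mul, h0, zero_mul]
    rw [map_mul, map_sub, aeval_C, sub_mul] at this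
    exact sub_eq_zero.mp this
  have hσθ : σ θ = 1 := by
    rw [RingHom.mem_ker, map_sub, map_one] at h1; exact sub_eq_zero.mp h1
  refine ⟨algebraMap A F v * aeval θ q, ?_, ?_, ?_⟩
  · rw [mul_mul_mul_comm, hmul, mul_assoc, ← mul_assoc (algebraMap A F v) _ (aeval θ q),
      ← map_mul, hv, map_one, one_mul]
  · rw [map_mul, AlgHom.commutes, ← aeval_algHom_apply, hσθ, aeval_def, ← eval_map]
    have : algebraMap A (A ⧸ I) = Ideal.Quotient.mk I := rfl
    rw [this, hqm]
    have h3 := congrArg (Ideal.Quotient.mk I) hv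
    rw [map_mul, hqa1, map_one, mul_one] at h3
    simp [h3]
  · intro x hx
    have e := hmul X
    rw [aeval_X, eval_X] at e
    have : algebraMap A F v * aeval θ q * x =
        algebraMap A F v * algebraMap A F w * aeval θ q * (θ * x) := by
      have hw' : algebraMap A F w * algebraMap A F a = 1 := by rw [← map_mul, hw, map_one]
      linear_combination (- algebraMap A F v * algebraMap A F w * x) * e -
        algebraMap A F v * aeval θ q * x * hw'
    rw [this]
    exact Ideal.mul_mem_left _ _ (h2 x hx)
end
section
variable {A F : Type*} [CommRing A] [CommRing F] [Algebra A F] (I : Ideal A)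

theorem hp_lift [HenselianRing A I] [Module.Finite A F] [Algebra.FinitePresentation A F] (Δ : F)
    [Algebra.Etale A (Localization.Away Δ)] (σ : Localization.Away Δ →ₐ[A] A ⧸ I) :
    ∃ τ : Localization.Away Δ →ₐ[A] A, (Ideal.Quotient.mkₐ A I).comp τ = σ := by
  have hI : I ≤ Ideal.jacobson ⊥ := HenselianRing.jac
  have hlh := isLocalHom_of_le_jacobson_bot I hI
  set σ' := σ.comp (IsScalarTower.toAlgHom A F (Localization.Away Δ)) with hσ'
  obtain ⟨θ, h1, h2⟩ := hp_theta I σ' (hp_cotangent I Δ σ _ rfl)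
  obtain ⟨ε, hε, hσε, hεK⟩ := hp_eps I σ' θ h1 h2
  have hIm : ∀ y : F, y ∈ I.map (algebraMap A F) ↔ y ∈ I • (⊤ : Submodule A F) := fun y => by
    rw [Ideal.smul_top_eq_map, Submodule.restrictScalars_mem]
  -- `εF = Aε`
  have hεF : LinearMap.range (LinearMap.mulLeft A ε) ≤ Submodule.span A {ε} := by
    refine Submodule.le_of_le_smul_of_le_jacobson_bot (I := I) ?_ hI ?_
    · rw [LinearMap.range_eq_map]; exact Module.Finite.fg_top.map _
    · rintro _ ⟨x, rfl⟩
      obtain ⟨a, ha⟩ := Ideal.Quotient.mk_surjective (σ' x)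
      have hk : ε * (x - algebraMap A F a) ∈ I • (⊤ : Submodule A F) := by
        rw [← hIm]
        refine hεK _ ?_
        rw [RingHom.mem_ker, map_sub, AlgHom.commutes, ← ha]
        exact sub_self _
      have hk2 : ε * (ε * (x - algebraMap A F a)) ∈
          I • LinearMap.range (LinearMap.mulLeft A ε) := by
        rw [LinearMap.range_eq_map, ← Submodule.map_smul'']
        exact ⟨_, hk, rfl⟩
      have e : LinearMap.mulLeft A ε x = a • ε + ε * (ε * (x - algebraMap A F a)) := by
        rw [LinearMap.mulLeft_apply, ← mul_assoc, hε, Algebra.smul_def]; ring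
      rw [e]
      exact add_mem (Submodule.mem_sup_left (Submodule.smul_mem _ _ (Submodule.mem_span_singleton_self _)))
        (Submodule.mem_sup_right hk2)
  let L : Ideal F := Ideal.span {1 - ε}
  let C := F ⧸ L
  have hCε : Ideal.Quotient.mk L ε = 1 := by
    rw [← map_one (Ideal.Quotient.mk L), eq_comm]
    exact Ideal.Quotient.eq.mpr (Ideal.subset_span rfl)
  have hsurj : Function.Surjective (algebraMap A C) := by
    intro y
    obtain ⟨x, rfl⟩ := Ideal.Quotient.mk_surjective y
    obtain ⟨a, ha⟩ := Submodule.mem_span_singleton.mp (hεF ⟨x, rfl⟩)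
    refine ⟨a, ?_⟩
    rw [LinearMap.mulLeft_apply, Algebra.smul_def] at ha
    have := congrArg (Ideal.Quotient.mk L) ha
    rw [map_mul, map_mul, hCε, mul_one, one_mul] at this
    exact this
  let ρ : C →ₐ[A] A ⧸ I := Ideal.Quotient.liftₐ L σ' (fun x hx => by
    obtain ⟨y, rfl⟩ := Ideal.mem_span_singleton'.mp hx
    rw [map_mul, map_sub, map_one, hσε, sub_self, mul_zero])
  have hρ : ∀ x, ρ (Ideal.Quotient.mk L x) = σ' x := fun x => rfl
  let J : Ideal A := RingHom.ker (algebraMap A C)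
  have hJI : J ≤ I := by
    intro r hr
    have : ρ (algebraMap A C r) = 0 := by rw [RingHom.mem_ker.mp hr, map_zero]
    rw [AlgHom.commutes] at this
    exact Ideal.Quotient.eq_zero_iff_mem.mp this
  have hJε : ∀ r ∈ J, algebraMap A F r * ε = 0 := by
    intro r hr
    have h3 : algebraMap A F r ∈ L := Ideal.Quotient.eq_zero_iff_mem.mp hr
    obtain ⟨y, hy⟩ := Ideal.mem_span_singleton'.mp h3
    rw [← hy, mul_assoc, sub_mul, one_mul, hε, sub_self, mul_zero]
  have hJfg : J.FG := by
    have : Algebra.FinitePresentation A C :=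
      Algebra.FinitePresentation.quotient (Submodule.fg_span (Set.finite_singleton _))
    exact Algebra.FinitePresentation.ker_fG_of_surjective (Algebra.ofId A C) hsurj
  -- the map from the localization to `C`
  have hΔ : IsUnit (Ideal.Quotient.mkₐ A L Δ) := by
    obtain ⟨d, hd⟩ := hsurj (Ideal.Quotient.mkₐ A L Δ)
    have h3 : Ideal.Quotient.mk I d = σ' Δ := by
      have := congrArg ρ hd
      rw [AlgHom.commutes] at this
      exact this
    have h4 : IsUnit (σ' Δ) := (IsLocalization.Away.algebraMap_isUnit Δ).map σ
    rw [← h3] at h4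
    rw [← hd]
    exact (IsUnit.of_map (Ideal.Quotient.mk I) d h4).map _
  let g : Localization.Away Δ →ₐ[A] C :=
    IsLocalization.Away.liftAlgHom (f := Ideal.Quotient.mkₐ A L) Δ hΔ
  have hg : ∀ x : F, g (algebraMap F _ x) = Ideal.Quotient.mk L x := fun x => by
    simp [g]; rfl
  let κ : A ⧸ (J * J) →ₐ[A] C := Ideal.Quotient.liftₐ (J * J) (Algebra.ofId A C)
    (fun a ha => Ideal.mul_le_right ha)
  have hκs : Function.Surjective κ := fun y => by
    obtain ⟨a, rfl⟩ := hsurj y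
    exact ⟨Ideal.Quotient.mk _ a, rfl⟩
  have hκn : ∀ r ∈ RingHom.ker (κ : A ⧸ (J * J) →+* C),
      ∀ s ∈ RingHom.ker (κ : A ⧸ (J * J) →+* C), r * s = 0 := by
    intro r hr s hs
    obtain ⟨r, rfl⟩ := Ideal.Quotient.mk_surjective r
    obtain ⟨s, rfl⟩ := Ideal.Quotient.mk_surjective s
    rw [← map_mul, Ideal.Quotient.eq_zero_iff_mem]
    exact Ideal.mul_mem_mul hr hs
  have hκ : IsNilpotent (RingHom.ker (κ : A ⧸ (J * J) →+* C)) := by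
    refine ⟨2, ?_⟩
    rw [pow_two, Ideal.zero_eq_bot, eq_bot_iff, Ideal.mul_le]
    intro r hr s hs
    exact hκn r hr s hs
  let ψ : Localization.Away Δ →ₐ[A] A ⧸ (J * J) :=
    Algebra.FormallySmooth.liftOfSurjective g κ hκs hκ
  have hψ : ∀ x, κ (ψ x) = g x := fun x =>
    Algebra.FormallySmooth.liftOfSurjective_apply g κ hκs hκ x
  have hψε : ψ (algebraMap F _ ε) = 1 := by
    set e := ψ (algebraMap F _ ε) with he
    have h3 : e * e = e := by rw [he, ← map_mul, ← map_mul, hε]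
    have h4 : 1 - e ∈ RingHom.ker (κ : A ⧸ (J * J) →+* C) := by
      rw [RingHom.mem_ker]
      change κ (1 - e) = 0
      rw [map_sub, map_one, he, hψ, hg, hCε, sub_self]
    have h5 := hκn _ h4 _ h4
    linear_combination h3 - h5
  have hJJ : J ≤ J • J := by
    intro r hr
    have h3 := congrArg (fun x => ψ (algebraMap F _ x)) (hJε r hr)
    simp only [map_mul, map_zero] at h3
    rw [hψε, mul_one, ← IsScalarTower.algebraMap_apply, AlgHom.commutes] at h3
    exact Ideal.Quotient.eq_zero_iff_mem.mp h3
  have hJ0 : J = ⊥ :=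
    Submodule.eq_bot_of_le_smul_of_le_jacobson_bot J J hJfg hJJ (hJI.trans hI)
  have hinj : Function.Injective (algebraMap A C) := (RingHom.injective_iff_ker_eq_bot _).mpr hJ0
  let e : A ≃ₐ[A] C := AlgEquiv.ofBijective (Algebra.ofId A C) ⟨hinj, hsurj⟩
  refine ⟨(e.symm : C →ₐ[A] A).comp g, ?_⟩
  have h6 : (Ideal.Quotient.mkₐ A I).comp (e.symm : C →ₐ[A] A) = ρ := by
    ext y
    obtain ⟨a, rfl⟩ := e.surjective y
    change Ideal.Quotient.mk I (e.symm (e a)) = ρ (algebraMap A C a)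
    rw [AlgEquiv.symm_apply_apply, AlgHom.commutes]
    rfl
  rw [← AlgHom.comp_assoc, h6]
  apply IsLocalization.algHom_ext (.powers Δ)
  ext x
  change ρ (g (algebraMap F _ x)) = σ (algebraMap F _ x)
  rw [hg, hρ]
  rfl
end

section
open Polynomial
theorem hp_factor {A : Type*} [CommRing A] (I : Ideal A) [HenselianRing A I] [Nontrivial (A ⧸ I)]
    (f : A[X]) (hf : f.Monic) (g h : (A ⧸ I)[X]) (hg : g.Monic) (hh : h.Monic)
    (hgh : IsCoprime g h) (H : f.map (Ideal.Quotient.mk I) = g * h) :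
    ∃ g' h' : A[X], f = g' * h' ∧ IsCoprime g' h' ∧ g'.map (Ideal.Quotient.mk I) = g ∧
      h'.map (Ideal.Quotient.mk I) = h := by
  have hn : f.natDegree = g.natDegree + h.natDegree := by
    rw [← hg.natDegree_mul hh, ← H, hf.natDegree_map]
  let p : MonicDegreeEq A f.natDegree := .mk f hf rfl
  let σ : UniversalCoprimeFactorizationRing g.natDegree h.natDegree hn p →ₐ[A] A ⧸ I :=
    (UniversalCoprimeFactorizationRing.homEquiv (A ⧸ I) _ _ hn p).symm
      ⟨(.mk g hg rfl, .mk h hh rfl), H.symm, hgh⟩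
  obtain ⟨τ, hτ⟩ := hp_lift I _ σ
  let q := UniversalCoprimeFactorizationRing.homEquiv A _ _ hn p τ
  have h1 := UniversalCoprimeFactorizationRing.homEquiv_comp_fst _ _ _ hn p τ (Ideal.Quotient.mkₐ A I)
  have h2 := UniversalCoprimeFactorizationRing.homEquiv_comp_snd _ _ _ hn p τ (Ideal.Quotient.mkₐ A I)
  rw [hτ] at h1 h2
  simp only [σ, Equiv.apply_symm_apply] at h1 h2
  refine ⟨q.1.1.1, q.1.2.1, ?_, q.2.2, ?_, ?_⟩
  · rw [q.2.1]; simp [p]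
  · exact congrArg Subtype.val h1.symm
  · exact congrArg Subtype.val h2.symm
end
section
open Polynomial
theorem hp_matrix {A : Type*} [CommRing A] (I : Ideal A) [HenselianRing A I] [Nontrivial (A ⧸ I)]
    (n : ℕ) (e : Matrix (Fin n) (Fin n) (A ⧸ I)) (he : e * e = e) :
    ∃ e' : Matrix (Fin n) (Fin n) A, e' * e' = e' ∧ e'.map (Ideal.Quotient.mk I) = e := by
  have hA : Nontrivial A := (Ideal.Quotient.mk I).domain_nontrivial
  rcases Nat.eq_zero_or_pos n with rfl | hn
  · exact ⟨0, Subsingleton.elim _ _, Subsingleton.elim _ _⟩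
  choose E' hE' using fun i j => Ideal.Quotient.mk_surjective (e i j)
  let E : Matrix (Fin n) (Fin n) A := Matrix.of E'
  let φ : Matrix (Fin n) (Fin n) A →+* Matrix (Fin n) (Fin n) (A ⧸ I) :=
    (Ideal.Quotient.mk I).mapMatrix
  have hE : φ E = e := by ext i j; exact hE' i j
  let N := E * E - E
  have hN : φ N = 0 := by simp only [N, map_sub, map_mul, hE, he, sub_self]
  let f : A[X] := N.charpoly.comp (X ^ 2 - X)
  have hX : (X ^ 2 - X : A[X]).Monic := by monicity!
  have hXd : (X ^ 2 - X : A[X]).natDegree ≠ 0 := by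
    have : (X ^ 2 - X : A[X]).natDegree = 2 := by compute_degree!
    omega
  have hf : f.Monic := N.charpoly_monic.comp hX hXd
  have hfE : aeval E f = 0 := by
    have : aeval E (X ^ 2 - X : A[X]) = N := by simp [N, pow_two]
    rw [aeval_comp, this, Matrix.aeval_self_charpoly]
  have hfm : f.map (Ideal.Quotient.mk I) = X ^ n * (X - C 1) ^ n := by
    rw [Polynomial.map_comp, ← Matrix.charpoly_map]
    have : N.map (Ideal.Quotient.mk I) = 0 := hN
    rw [this, Matrix.charpoly_zero]
    simp only [Fintype.card_fin, Polynomial.map_sub, Polynomial.map_pow, map_X, pow_comp, X_comp,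
      ← mul_pow]
    congr 1
    rw [map_one]; ring
  have hcop : IsCoprime ((X : (A ⧸ I)[X]) ^ n) ((X - C 1) ^ n) :=
    IsCoprime.pow ⟨1, -1, by rw [map_one]; ring⟩
  obtain ⟨g, h, hgh, ⟨a, b, hab⟩, hg, hh⟩ := hp_factor I f hf _ _ (monic_X_pow n)
    ((monic_X_sub_C 1).pow n) hcop hfm
  have key : ∀ p : A[X], φ (aeval E p) = aeval e (p.map (Ideal.Quotient.mk I)) := by
    intro p
    rw [aeval_def, hom_eval₂, hE, aeval_def, eval₂_map]
    congr 1
    ext r i j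
    by_cases hij : i = j <;> simp [φ, Matrix.algebraMap_matrix_apply, hij]
  obtain ⟨m, rfl⟩ : ∃ m, n = m + 1 := ⟨n - 1, by omega⟩
  have h1 : e * φ (aeval E (a * g)) = φ (aeval E (a * g)) := by
    rw [key, Polynomial.map_mul, hg, pow_succ', mul_left_comm, map_mul, aeval_X, ← mul_assoc, he]
  have h2 : e * φ (aeval E (b * h)) = 0 := by
    rw [key, Polynomial.map_mul, hh, pow_succ', mul_left_comm, map_mul, map_sub, aeval_X, aeval_C,
      map_one, ← mul_assoc, mul_sub, mul_one, he, sub_self, zero_mul]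
  have h3 : aeval E (a * g) + aeval E (b * h) = 1 := by
    rw [← map_add, hab, map_one]
  refine ⟨aeval E (a * g), ?_, ?_⟩
  · have h4 : aeval E (a * g) * aeval E (b * h) = 0 := by
      rw [← map_mul, show a * g * (b * h) = a * b * (g * h) by ring, ← hgh, map_mul, hfE, mul_zero]
    calc _ = aeval E (a * g) * (aeval E (a * g) + aeval E (b * h)) := by rw [mul_add, h4, add_zero]
      _ = _ := by rw [h3, mul_one]
  · change φ (aeval E (a * g)) = e
    rw [← h1]
    have h5 := congrArg φ h3
    rw [map_add, map_one] at h5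
    have h6 := congrArg (e * ·) h5
    simp only [mul_add, h2, add_zero, mul_one] at h6
    exact h6
end

universe u v

theorem hp_image {A : Type u} [CommRing A] {n : ℕ} (E : (Fin n → A) →ₗ[A] (Fin n → A))
    (hE : E ∘ₗ E = E) : ∃ (M : Type (max u v)) (_ : AddCommGroup M) (_ : Module A M)
      (i : M →ₗ[A] (Fin n → A)) (π : (Fin n → A) →ₗ[A] M), π ∘ₗ i = LinearMap.id ∧ i ∘ₗ π = E := by
  let M := ULift.{v} (LinearMap.range E)
  let i : M →ₗ[A] (Fin n → A) :=
    (LinearMap.range E).subtype ∘ₗ (ULift.moduleEquiv : M ≃ₗ[A] LinearMap.range E).toLinearMap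
  let π : (Fin n → A) →ₗ[A] M :=
    (ULift.moduleEquiv : M ≃ₗ[A] LinearMap.range E).symm.toLinearMap ∘ₗ E.rangeRestrict
  have hiπ : i ∘ₗ π = E := by ext; rfl
  have hinj : Function.Injective i :=
    (Submodule.injective_subtype _).comp (ULift.moduleEquiv : M ≃ₗ[A] LinearMap.range E).injective
  have hsurj : Function.Surjective π :=
    (ULift.moduleEquiv : M ≃ₗ[A] LinearMap.range E).symm.surjective.comp E.surjective_rangeRestrict
  refine ⟨M, inferInstance, inferInstance, i, π, ?_, hiπ⟩
  refine LinearMap.ext fun x => ?_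
  obtain ⟨y, rfl⟩ := hsurj x
  apply hinj
  exact LinearMap.congr_fun hE y

theorem hp_c {A : Type*} [CommRing A] (I : Ideal A) {n : ℕ} (e' : Matrix (Fin n) (Fin n) A) :
    ∃ c : ((A ⧸ I) ⊗[A] (Fin n → A)) ≃ₗ[A ⧸ I] (Fin n → A ⧸ I),
      ∀ x, c ((Matrix.toLin' e').baseChange (A ⧸ I) x) =
        Matrix.toLin' (e'.map (Ideal.Quotient.mk I)) (c x) := by
  refine ⟨TensorProduct.piScalarRight A (A ⧸ I) (A ⧸ I) (Fin n), ?_⟩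
  intro x
  induction x using TensorProduct.induction_on with
  | zero => simp only [map_zero]
  | add x y hx hy => simp only [map_add, hx, hy]
  | tmul r v =>
    rw [LinearMap.baseChange_tmul, TensorProduct.piScalarRight_apply,
      TensorProduct.piScalarRight_apply, TensorProduct.piScalarRightHom_tmul,
      TensorProduct.piScalarRightHom_tmul, Matrix.toLin'_apply, Matrix.toLin'_apply]
    funext k
    simp only [Matrix.mulVec, dotProduct, Matrix.map_apply, Algebra.smul_def, map_sum, map_mul,
      Finset.sum_mul, Ideal.Quotient.algebraMap_eq, mul_assoc]

theorem hp_iso0 {B P F T V : Type*} [CommRing B] [AddCommGroup P] [Module B P]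
    [AddCommGroup F] [Module B F] [AddCommGroup T] [Module B T] [AddCommGroup V] [Module B V]
    (p : F →ₗ[B] P) (s : P →ₗ[B] F) (hs : ∀ x, p (s x) = x)
    (c : V ≃ₗ[B] F) (i : T →ₗ[B] V) (π : V →ₗ[B] T) (hπi : ∀ x, π (i x) = x)
    (h : ∀ x, c (i (π x)) = s (p (c x))) : Nonempty (T ≃ₗ[B] P) := by
  refine ⟨LinearEquiv.ofLinear (p ∘ₗ c.toLinearMap ∘ₗ i) (π ∘ₗ c.symm.toLinearMap ∘ₗ s) ?_ ?_⟩
  · refine LinearMap.ext fun x => ?_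
    change p (c (i (π (c.symm (s x))))) = x
    rw [h, hs, c.apply_symm_apply, hs]
  · refine LinearMap.ext fun x => ?_
    change π (c.symm (s (p (c (i x))))) = x
    rw [← h, c.symm_apply_apply, hπi, hπi]

theorem hp_iso {A : Type u} [CommRing A] (I : Ideal A)
    (P : Type v) [AddCommGroup P] [Module (A ⧸ I) P] {n : ℕ}
    (p : (Fin n → A ⧸ I) →ₗ[A ⧸ I] P) (s : P →ₗ[A ⧸ I] (Fin n → A ⧸ I))
    (hs : p ∘ₗ s = LinearMap.id) (e' : Matrix (Fin n) (Fin n) A)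
    (hsp : s ∘ₗ p = Matrix.toLin' (e'.map (Ideal.Quotient.mk I)))
    {M : Type*} [AddCommGroup M] [Module A M] (i : M →ₗ[A] (Fin n → A))
    (π : (Fin n → A) →ₗ[A] M) (hπi : π ∘ₗ i = LinearMap.id) (hiπ : i ∘ₗ π = Matrix.toLin' e') :
    Nonempty (((A ⧸ I) ⊗[A] M) ≃ₗ[A ⧸ I] P) := by
  obtain ⟨c, hc⟩ := hp_c I e'
  refine hp_iso0 p s (LinearMap.congr_fun hs) c (i.baseChange (A ⧸ I)) (π.baseChange (A ⧸ I)) ?_ ?_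
  · intro x
    rw [← LinearMap.comp_apply, ← LinearMap.baseChange_comp, hπi, LinearMap.baseChange_id,
      LinearMap.id_apply]
  · intro x
    rw [← LinearMap.comp_apply (LinearMap.baseChange (A ⧸ I) i), ← LinearMap.baseChange_comp, hiπ,
      hc, ← hsp, LinearMap.comp_apply]

/-- **Henselian pairs: surjectivity of base change on isomorphism classes of finite
projective modules.** Let `(A, I)` be a henselian pair. Every finite projective
`A/I`-module `P` lifts to a finite projective `A`-module `M`, i.e. there is an
isomorphism of `A/I`-modules `M/IM ≅ P`. -/
theorem henselian_finite_projective_baseChange_surjective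
    {A : Type u} [CommRing A] (I : Ideal A) [HenselianRing A I]
    (P : Type v) [AddCommGroup P] [Module (A ⧸ I) P]
    [Module.Finite (A ⧸ I) P] [Module.Projective (A ⧸ I) P] :
    ∃ (M : Type (max u v)) (_ : AddCommGroup M) (_ : Module A M),
      Module.Finite A M ∧ Module.Projective A M ∧
        Nonempty (((A ⧸ I) ⊗[A] M) ≃ₗ[A ⧸ I] P) := by
  rcases subsingleton_or_nontrivial (A ⧸ I) with hs | hs
  · have h1 : Subsingleton P := Module.subsingleton (A ⧸ I) P
    have h2 : Subsingleton ((A ⧸ I) ⊗[A] PUnit.{max u v + 1}) := Module.subsingleton (A ⧸ I) _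
    exact ⟨PUnit, inferInstance, inferInstance, inferInstance, inferInstance,
      ⟨LinearEquiv.ofSubsingleton _ _⟩⟩
  obtain ⟨n, p, hp⟩ := Module.Finite.exists_fin' (A ⧸ I) P
  obtain ⟨s, hs⟩ := Module.projective_lifting_property p LinearMap.id hp
  let e := LinearMap.toMatrix' (s ∘ₗ p)
  have he : e * e = e := by
    rw [← LinearMap.toMatrix'_comp, LinearMap.comp_assoc, ← LinearMap.comp_assoc p s p, hs,
      LinearMap.id_comp]
  obtain ⟨e', he', hee⟩ := hp_matrix I n e he
  obtain ⟨M, _, _, i, π, hπi, hiπ⟩ := hp_image.{u, v} (Matrix.toLin' e')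
    (by rw [← Matrix.toLin'_mul, he'])
  have hsurj : Function.Surjective π := fun x => ⟨i x, LinearMap.congr_fun hπi x⟩
  refine ⟨M, inferInstance, inferInstance, Module.Finite.of_surjective π hsurj,
    Module.Projective.of_split i π hπi, ?_⟩
  refine hp_iso I P p s hs e' ?_ i π hπi hiπ
  rw [hee, Matrix.toLin'_toMatrix']
end

section
/- Let (A, I) be a henselian pair, let M be a finite projective A-module, and let F ⊆ M be an A-submodule such that I·M ⊆ F and such that the quotient M/F — which is naturally a module over A/I because I·M ⊆ F — is a finite projective A/I-module. Then there exist A-submodules L, T ⊆ M such that M = L ⊕ T (an internal direct sum decomposition of M, so that in particular L and T are finite projective A-modules) and F = L + I·T. (Existence of normal decompositions.) -/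
open TensorProduct

lemma aux_unique {A S B : Type*} [CommRing A] [CommRing S] [Algebra A S] [CommRing B] [Algebra A B]
    (c : S) [Algebra.FormallyUnramified A (Localization.Away c)] (N : Ideal B) (hN : N ^ 2 = ⊥)
    (f₁ f₂ : S →ₐ[A] B) (h : ∀ x, f₁ x - f₂ x ∈ N) (hc : IsUnit (f₂ c)) : f₁ = f₂ := by
  have hnil : IsNilpotent N := ⟨2, hN⟩
  have hmk : ∀ x, Ideal.Quotient.mk N (f₁ x) = Ideal.Quotient.mk N (f₂ x) := fun x =>
    Ideal.Quotient.eq.mpr (h x)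
  have hc1 : IsUnit (f₁ c) := by
    rw [← hnil.isUnit_quotient_mk_iff, hmk, hnil.isUnit_quotient_mk_iff]; exact hc
  let g₁ : Localization.Away c →ₐ[A] B := IsLocalization.Away.liftAlgHom (f := f₁) c hc1
  let g₂ : Localization.Away c →ₐ[A] B := IsLocalization.Away.liftAlgHom (f := f₂) c hc
  have e1 : ∀ x, g₁ (algebraMap S _ x) = f₁ x := fun x => by simp [g₁]
  have e2 : ∀ x, g₂ (algebraMap S _ x) = f₂ x := fun x => by simp [g₂]
  have : g₁ = g₂ := by
    refine Algebra.FormallyUnramified.lift_unique N hnil g₁ g₂ ?_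
    refine IsLocalization.algHom_ext (Submonoid.powers c) ?_
    ext x
    simpa [e1, e2, Algebra.algHom] using hmk x
  ext x
  rw [← e1, ← e2, this]

lemma aux_step1 {A S : Type*} [CommRing A] (I : Ideal A) [CommRing S] [Algebra A S]
    (c : S) [Algebra.FormallyUnramified A (Localization.Away c)] (σ : S →ₐ[A] A ⧸ I)
    (hc : IsUnit (σ c)) :
    RingHom.ker σ ≤ I.map (algebraMap A S) ⊔ RingHom.ker σ ^ 2 := by
  set K := RingHom.ker σ with hK
  set Z := I.map (algebraMap A S) ⊔ K ^ 2 with hZ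
  let f₁ : S →ₐ[A] S ⧸ Z := Ideal.Quotient.mkₐ A Z
  let j : A ⧸ I →ₐ[A] S ⧸ Z := Ideal.Quotient.liftₐ I (Algebra.ofId A (S ⧸ Z)) (by
    intro a ha
    change algebraMap A (S ⧸ Z) a = 0
    rw [IsScalarTower.algebraMap_apply A S (S ⧸ Z)]
    exact Ideal.Quotient.eq_zero_iff_mem.mpr (Ideal.mem_sup_left (Ideal.mem_map_of_mem _ ha)))
  have hf : f₁ = j.comp σ := by
    refine aux_unique c (K.map (Ideal.Quotient.mk Z)) ?_ f₁ (j.comp σ) ?_ (hc.map j)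
    · rw [← Ideal.map_pow, Ideal.map_eq_bot_iff_le_ker, Ideal.mk_ker]
      exact le_sup_right
    · intro x
      obtain ⟨a, ha⟩ := Ideal.Quotient.mk_surjective (σ x)
      have h1 : x - algebraMap A S a ∈ K := by
        rw [hK, RingHom.mem_ker, map_sub, AlgHom.commutes, ← ha]; exact sub_self _
      have h2 : j (σ x) = f₁ (algebraMap A S a) := by
        rw [← ha, AlgHom.commutes]
        exact j.commutes a
      rw [AlgHom.comp_apply, h2, ← map_sub]
      exact Ideal.mem_map_of_mem _ h1
  intro k hk
  have := AlgHom.congr_fun hf k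
  rw [AlgHom.comp_apply, (RingHom.mem_ker).mp hk, map_zero] at this
  exact Ideal.Quotient.eq_zero_iff_mem.mp this

open Polynomial in
lemma aux_step3 {A S : Type*} [CommRing A] (I : Ideal A) [CommRing S] [Algebra A S]
    {m : ℕ} (y : Fin m → S) (σ : S →ₐ[A] A ⧸ I) (hy : ∀ i, σ (y i) = 0)
    (hspan : Submodule.span A (Set.range (Sum.elim (fun _ : Unit => (1 : S)) y)) = ⊤)
    (a : S) (ha : σ a = 1) (haK : ∀ k, σ k = 0 → a * k ∈ I.map (algebraMap A S)) :
    ∃ χ : A[X], χ.Monic ∧ χ.map (Ideal.Quotient.mk I) = (X - 1) * X ^ m ∧ aeval a χ = 0 := by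
  classical
  set v : Unit ⊕ Fin m → S := Sum.elim (fun _ : Unit => (1 : S)) y with hv
  have key : ∀ j, ∃ w : Unit ⊕ Fin m → A, ∑ i, w i • v i = a * v j ∧
      Ideal.Quotient.mk I (w (.inl ())) = (if j = .inl () then 1 else 0) ∧
      (j ≠ .inl () → ∀ i, Ideal.Quotient.mk I (w i) = 0) := by
    rintro (⟨⟩ | j)
    · have : a ∈ Submodule.span A (Set.range v) := hspan ▸ Submodule.mem_top
      obtain ⟨w, hw⟩ := (Submodule.mem_span_range_iff_exists_fun A).mp this
      refine ⟨w, by simpa [hv] using hw, ?_, by simp⟩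
      have := congrArg σ hw
      simpa [hv, hy, ha, Algebra.smul_def] using this
    · have h1 : a * y j ∈ I • (⊤ : Submodule A S) := by
        rw [Ideal.smul_top_eq_map]; exact haK _ (hy j)
      rw [← hspan, Submodule.mem_ideal_smul_span_iff_exists_sum] at h1
      obtain ⟨w, hw, hs⟩ := h1
      refine ⟨w, ?_, by simp [Ideal.Quotient.eq_zero_iff_mem, hw], fun _ i => Ideal.Quotient.eq_zero_iff_mem.mpr (hw i)⟩
      rw [Finsupp.sum_fintype _ _ (by simp)] at hs
      exact hs
  choose w hw1 hw2 hw3 using key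
  let W : Matrix (Unit ⊕ Fin m) (Unit ⊕ Fin m) A := .of fun i j => w j i
  have hrep : W.Represents v (Algebra.lmul A S a) := by
    rw [Matrix.represents_iff']
    intro j
    simpa [W] using hw1 j
  refine ⟨W.charpoly, W.charpoly_monic, ?_, ?_⟩
  · rw [← Matrix.charpoly_map]
    have : W.map (Ideal.Quotient.mk I) =
        Matrix.fromBlocks 1 0 (W.map (Ideal.Quotient.mk I)).toBlocks₂₁ 0 := by
      ext i j
      rcases i with (⟨⟩|i) <;> rcases j with (⟨⟩|j)
      · simpa [W] using hw2 (.inl ())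
      · simpa [W] using hw3 (.inr j) (by simp) (.inl ())
      · simp [W, Matrix.toBlocks₂₁]
      · simpa [W] using hw3 (.inr j) (by simp) (.inr i)
    rw [this, Matrix.charpoly_fromBlocks_zero₁₂]
    simp [Matrix.charpoly_one]
  · let W' : Matrix.isRepresentation A v := ⟨W, _, hrep⟩
    have h0 : Matrix.isRepresentation.toEnd A v hspan W' = Algebra.lmul A S a :=
      Matrix.isRepresentation.eq_toEnd_of_represents A v hspan W' hrep
    have h1 : aeval (Algebra.lmul A S a) W.charpoly = 0 := by
      rw [← h0, Polynomial.aeval_algHom_apply,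
        ← map_zero (Matrix.isRepresentation.toEnd A v hspan)]
      congr 1
      ext1
      rw [Polynomial.aeval_subalgebra_coe, Matrix.aeval_self_charpoly, Subalgebra.coe_zero]
    rw [Polynomial.aeval_algHom_apply] at h1
    simpa using LinearMap.congr_fun h1 1

open Polynomial in
lemma aux_idem {A S : Type*} [CommRing A] (I : Ideal A) [HenselianRing A I] [CommRing S]
    [Algebra A S] [Module.Finite A S]
    (c : S) [Algebra.FormallyUnramified A (Localization.Away c)] (σ : S →ₐ[A] A ⧸ I)
    (hc : IsUnit (σ c)) :
    ∃ ε : S, IsIdempotentElem ε ∧ σ ε = 1 ∧ ∀ x : S, ∃ b : A, x * ε = b • ε := by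
  classical
  have hjac := HenselianRing.jac (R := A) (I := I)
  have hloc := isLocalHom_of_le_jacobson_bot I hjac
  obtain ⟨m, s, hs⟩ := Module.Finite.exists_fin (R := A) (M := S)
  choose b hb using fun i => Ideal.Quotient.mk_surjective (σ (s i))
  let y : Fin m → S := fun i => s i - algebraMap A S (b i)
  have hy : ∀ i, σ (y i) = 0 := fun i => by
    simp only [y, map_sub, AlgHom.commutes, ← hb]
    exact sub_self _
  have hspan : Submodule.span A (Set.range (Sum.elim (fun _ : Unit => (1 : S)) y)) = ⊤ := by
    rw [eq_top_iff, ← hs, Submodule.span_le]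
    rintro _ ⟨i, rfl⟩
    have : s i = y i + b i • (1 : S) := by simp [y, Algebra.smul_def]
    rw [this]
    refine add_mem (Submodule.subset_span ⟨.inr i, rfl⟩)
      (Submodule.smul_mem _ _ (Submodule.subset_span ⟨.inl (), rfl⟩))
  -- every element of the kernel
  have hker : RingHom.ker σ ≤ I.map (algebraMap A S) ⊔ Ideal.span (Set.range y) := by
    intro k hk
    have hk' : k ∈ Submodule.span A (Set.range (Sum.elim (fun _ : Unit => (1 : S)) y)) :=
      hspan ▸ Submodule.mem_top
    obtain ⟨w, hw⟩ := (Submodule.mem_span_range_iff_exists_fun A).mp hk'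
    have h1 := congrArg σ hw
    rw [RingHom.mem_ker.mp hk] at h1
    have h2 : w (.inl ()) ∈ I := by
      rw [← Ideal.Quotient.eq_zero_iff_mem]
      simpa [hy, Algebra.smul_def] using h1
    rw [← hw, Fintype.sum_sum_type]
    refine add_mem (Ideal.mem_sup_left ?_) (Ideal.mem_sup_right ?_)
    · simpa [Algebra.smul_def] using Ideal.mem_map_of_mem (algebraMap A S) h2
    · refine sum_mem fun i _ => ?_
      rw [Algebra.smul_def]
      exact Ideal.mul_mem_left _ _ (Ideal.subset_span ⟨i, rfl⟩)
  have hyK : Ideal.span (Set.range y) ≤ RingHom.ker σ := by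
    rw [Ideal.span_le]
    rintro _ ⟨i, rfl⟩
    exact hy i
  obtain ⟨a, ha1, haK⟩ := Submodule.exists_sub_one_mem_and_smul_le_of_fg_of_le_sup
    (I := RingHom.ker σ) (N := I.map (algebraMap A S)) (N' := Ideal.span (Set.range y))
    (P := RingHom.ker σ) (Submodule.fg_span (Set.finite_range y)) hyK (by
      refine (aux_step1 I c σ hc).trans (sup_le le_sup_left ?_)
      rw [pow_two]
      refine (Ideal.mul_mono_right hker).trans ?_
      rw [Ideal.mul_sup]
      exact sup_le_sup Ideal.mul_le_right le_rfl)
  have hσa : σ a = 1 := by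
    have := RingHom.mem_ker.mp ha1
    rwa [map_sub, map_one, sub_eq_zero] at this
  have haK' : ∀ k, σ k = 0 → a * k ∈ I.map (algebraMap A S) := fun k hk =>
    haK (Submodule.smul_mem_pointwise_smul k a _ (RingHom.mem_ker.mpr hk))
  obtain ⟨χ, hχm, hχ, hχa⟩ := aux_step3 I y σ hy hspan a hσa haK'
  obtain ⟨r, hr, hr1⟩ := HenselianRing.is_henselian (I := I) χ hχm 1 (by
      rw [← Ideal.Quotient.eq_zero_iff_mem, ← eval_map_apply, hχ]; simp) (by
      rw [← eval_map_apply, ← derivative_map, hχ]; simp [derivative_mul])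
  have hr1' : Ideal.Quotient.mk I r = 1 := by
    rw [← sub_eq_zero, ← map_one (Ideal.Quotient.mk I), ← map_sub]
    exact Ideal.Quotient.eq_zero_iff_mem.mpr hr1
  obtain ⟨q, hq⟩ := dvd_iff_isRoot.mpr hr
  have hqr : Ideal.Quotient.mk I (q.eval r) = 1 := by
    have h := congrArg (fun p => eval r (derivative p)) hq
    simp [derivative_mul] at h
    rw [← h, ← eval_map_apply, ← derivative_map, hχ, hr1']
    simp [derivative_mul]
  have hru : IsUnit r := (isUnit_map_iff (Ideal.Quotient.mk I) r).mp (by rw [hr1']; exact isUnit_one)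
  have hqu : IsUnit (q.eval r) :=
    (isUnit_map_iff (Ideal.Quotient.mk I) _).mp (by rw [hqr]; exact isUnit_one)
  obtain ⟨u, hu⟩ := hqu.exists_left_inv
  obtain ⟨t, ht⟩ := hru.exists_left_inv
  set z := aeval a q with hz
  have haz : a * z = r • z := by
    rw [hq] at hχa
    simp only [map_mul, map_sub, aeval_X, aeval_C] at hχa
    rw [Algebra.smul_def, ← sub_eq_zero, ← sub_mul]
    exact hχa
  have hpz : ∀ p : A[X], aeval a p * z = p.eval r • z := by
    intro p
    obtain ⟨p', hp'⟩ := X_sub_C_dvd_sub_C_eval (a := r) (p := p)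
    have := congrArg (fun f => aeval a f * z) hp'
    simp only [map_mul, map_sub, aeval_X, aeval_C] at this
    have h2 : (a - algebraMap A S r) * z = 0 := by
      rw [sub_mul, haz, Algebra.smul_def, sub_self]
    have h3 : (a - algebraMap A S r) * aeval a p' * z = 0 := by
      rw [mul_right_comm, h2, zero_mul]
    rw [h3, sub_mul, sub_eq_zero] at this
    rw [this, Algebra.smul_def]
  have hεε : (u • z) * (u • z) = u • z := by
    rw [smul_mul_smul_comm, hz, hpz, ← hz, smul_smul, mul_assoc, hu, mul_one]
  have hσε : σ (u • z) = 1 := by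
    rw [map_smul, hz, ← aeval_algHom_apply, hσa]
    have h1 : aeval (1 : A ⧸ I) q = 1 := by
      have := eval₂_at_apply (p := q) (Ideal.Quotient.mk I) r
      rw [hr1', hqr] at this
      exact this
    have h2 : Ideal.Quotient.mk I u = 1 := by
      have := congrArg (Ideal.Quotient.mk I) hu
      rwa [map_mul, hqr, mul_one, map_one] at this
    rw [h1, Algebra.smul_def, mul_one]
    exact h2
  set ε := u • z with hε
  have haε : a * ε = r • ε := by
    rw [hε, mul_smul_comm, haz, smul_comm]
  refine ⟨ε, hεε, hσε, fun x => ?_⟩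
  let N' : Submodule A S := LinearMap.range (LinearMap.mulRight A ε)
  have hfg : N'.FG := by
    change (LinearMap.range (LinearMap.mulRight A ε)).FG
    rw [LinearMap.range_eq_map]
    exact Submodule.FG.map _ Module.Finite.fg_top
  have hN' : N' ≤ Submodule.span A {ε} := by
    refine Submodule.le_of_le_smul_of_le_jacobson_bot (I := I) hfg hjac ?_
    rintro _ ⟨x, rfl⟩
    obtain ⟨b, hb⟩ := Ideal.Quotient.mk_surjective (σ x)
    have hk : σ (x - algebraMap A S b) = 0 := by
      rw [map_sub, AlgHom.commutes, ← hb]; exact sub_self _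
    have hx : LinearMap.mulRight A ε x = b • ε + t • (a * (x - algebraMap A S b)) * ε := by
      have : t • (a * (x - algebraMap A S b)) * ε = (x - algebraMap A S b) * ε := by
        rw [smul_mul_assoc, mul_right_comm, haε, smul_mul_assoc, smul_smul, ht, one_smul, mul_comm]
      rw [this, LinearMap.mulRight_apply, sub_mul, Algebra.smul_def]; ring
    rw [hx]
    refine add_mem (Submodule.mem_sup_left (Submodule.smul_mem _ _ (Submodule.mem_span_singleton_self _)))
      (Submodule.mem_sup_right ?_)
    rw [smul_mul_assoc]
    refine Submodule.smul_mem _ _ ?_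
    have h1 : a * (x - algebraMap A S b) ∈ I • (⊤ : Submodule A S) := by
      rw [Ideal.smul_top_eq_map]; exact haK' _ hk
    have h2 := Submodule.mem_map_of_mem (f := LinearMap.mulRight A ε) h1
    rw [Submodule.map_smul'', Submodule.map_top] at h2
    exact h2
  obtain ⟨b, hb⟩ := Submodule.mem_span_singleton.mp (hN' ⟨x, rfl⟩)
  exact ⟨b, hb.symm⟩

lemma aux_section {A S : Type*} [CommRing A] (I : Ideal A) [HenselianRing A I] [CommRing S]
    [Algebra A S] [Module.Finite A S] [Algebra.FinitePresentation A S]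
    (c : S) [Algebra.Etale A (Localization.Away c)] (σ : S →ₐ[A] A ⧸ I)
    (hc : IsUnit (σ c)) :
    ∃ τ : S →ₐ[A] A, ∀ x, Ideal.Quotient.mk I (τ x) = σ x := by
  have hjac := HenselianRing.jac (R := A) (I := I)
  have hloc := isLocalHom_of_le_jacobson_bot I hjac
  obtain ⟨ε, hε, hσε, hgen⟩ := aux_idem I c σ hc
  let E : Ideal S := Ideal.span {1 - ε}
  have hfp : Algebra.FinitePresentation A (S ⧸ E) :=
    Algebra.FinitePresentation.quotient (by exact ⟨{1 - ε}, by simp [E]⟩)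
  have hmε : Ideal.Quotient.mk E ε = 1 := by
    rw [← sub_eq_zero, ← neg_eq_zero, neg_sub, ← map_one (Ideal.Quotient.mk E), ← map_sub]
    exact Ideal.Quotient.eq_zero_iff_mem.mpr (Ideal.mem_span_singleton_self _)
  have hbx : ∀ x : S, ∃ b : A, Ideal.Quotient.mk E x = algebraMap A (S ⧸ E) b ∧
      σ x = Ideal.Quotient.mk I b := by
    intro x
    obtain ⟨b, hb⟩ := hgen x
    refine ⟨b, ?_, ?_⟩
    · have := congrArg (Ideal.Quotient.mk E) hb
      rw [Algebra.smul_def, map_mul, map_mul, hmε, mul_one, mul_one] at this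
      exact this
    · have := congrArg σ hb
      rw [map_mul, map_smul, hσε, mul_one, Algebra.smul_def, mul_one] at this
      exact this
  have hsurj : Function.Surjective (Algebra.ofId A (S ⧸ E)) := by
    intro x
    obtain ⟨x, rfl⟩ := Ideal.Quotient.mk_surjective x
    obtain ⟨b, hb, -⟩ := hbx x
    exact ⟨b, hb.symm⟩
  let J : Ideal A := RingHom.ker (Algebra.ofId A (S ⧸ E)).toRingHom
  have hJfg : J.FG := Algebra.FinitePresentation.ker_fG_of_surjective (Algebra.ofId A (S ⧸ E)) hsurj
  have hJ : ∀ x, x ∈ J ↔ x • ε = 0 := by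
    intro x
    have h1 : x ∈ J ↔ algebraMap A S x ∈ E := by
      rw [← Ideal.Quotient.eq_zero_iff_mem (I := E)]; rfl
    rw [h1, Ideal.mem_span_singleton, Algebra.smul_def]
    constructor
    · rintro ⟨y, hy⟩
      rw [hy, mul_right_comm, sub_mul, one_mul, hε.eq, sub_self, zero_mul]
    · intro h
      exact ⟨algebraMap A S x, by rw [sub_mul, one_mul, mul_comm ε, h, sub_zero]⟩
  have hJI : J ≤ I := by
    intro x hx
    have := congrArg σ ((hJ x).mp hx)
    rw [map_smul, hσε, map_zero, Algebra.smul_def, mul_one] at this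
    exact Ideal.Quotient.eq_zero_iff_mem.mp this
  have hcQ : IsUnit (Ideal.Quotient.mkₐ A E c) := by
    obtain ⟨b, hb, hb'⟩ := hbx c
    rw [hb'] at hc
    have := ((isUnit_map_iff (Ideal.Quotient.mk I) b).mp hc).map (algebraMap A (S ⧸ E))
    rw [← hb] at this
    exact this
  let f : Localization.Away c →ₐ[A] S ⧸ E :=
    IsLocalization.Away.liftAlgHom (f := Ideal.Quotient.mkₐ A E) c hcQ
  have hf : ∀ x, f (algebraMap S _ x) = Ideal.Quotient.mkₐ A E x := fun x => by simp [f]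
  let g : A ⧸ J ^ 2 →ₐ[A] S ⧸ E := Ideal.Quotient.liftₐ (J ^ 2) (Algebra.ofId A (S ⧸ E)) (by
    intro x hx
    exact (Ideal.pow_le_self two_ne_zero) hx)
  have hg : Function.Surjective g := by
    intro x
    obtain ⟨b, hb⟩ := hsurj x
    exact ⟨Ideal.Quotient.mk _ b, hb⟩
  have hgker : RingHom.ker (g : A ⧸ J ^ 2 →+* S ⧸ E) ≤ J.map (Ideal.Quotient.mk (J ^ 2)) := by
    intro x hx
    obtain ⟨b, rfl⟩ := Ideal.Quotient.mk_surjective x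
    exact Ideal.mem_map_of_mem _ hx
  have hsq : RingHom.ker (g : A ⧸ J ^ 2 →+* S ⧸ E) ^ 2 = ⊥ := by
    rw [eq_bot_iff]
    refine (Ideal.pow_right_mono hgker 2).trans ?_
    rw [← Ideal.map_pow, Ideal.map_quotient_self]
  let l := Algebra.FormallySmooth.liftOfSurjective f g hg ⟨2, hsq⟩
  have hl : ∀ x, g (l x) = f x := Algebra.FormallySmooth.liftOfSurjective_apply f g hg ⟨2, hsq⟩
  let l' : S →ₐ[A] A ⧸ J ^ 2 := l.comp (IsScalarTower.toAlgHom A S (Localization.Away c))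
  have hl' : l' (1 - ε) = 0 := by
    have h1 : l' (1 - ε) ∈ RingHom.ker (g : A ⧸ J ^ 2 →+* S ⧸ E) := by
      change g (l (algebraMap S _ (1 - ε))) = 0
      rw [hl, hf]
      exact Ideal.Quotient.eq_zero_iff_mem.mpr (Ideal.mem_span_singleton_self _)
    have h2 : l' (1 - ε) * l' (1 - ε) ∈ RingHom.ker (g : A ⧸ J ^ 2 →+* S ⧸ E) ^ 2 := by
      rw [pow_two (RingHom.ker (g : A ⧸ J ^ 2 →+* S ⧸ E))]; exact Ideal.mul_mem_mul h1 h1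
    rwa [hsq, ← map_mul, hε.one_sub.eq, Ideal.mem_bot] at h2
  have hJJ : J ≤ J • J := by
    intro x hx
    have h1 : algebraMap A S x = x • (1 - ε) := by
      rw [smul_sub, (hJ x).mp hx, sub_zero, Algebra.smul_def, mul_one]
    have h2 := congrArg l' h1
    rw [map_smul, hl', smul_zero, AlgHom.commutes] at h2
    rw [smul_eq_mul, ← pow_two]
    exact Ideal.Quotient.eq_zero_iff_mem.mp h2
  have hJbot : J = ⊥ :=
    Submodule.eq_bot_of_le_smul_of_le_jacobson_bot J J hJfg hJJ (hJI.trans hjac)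
  have hinj : Function.Injective (Algebra.ofId A (S ⧸ E)) :=
    (RingHom.injective_iff_ker_eq_bot _).mpr hJbot
  let e := AlgEquiv.ofBijective (Algebra.ofId A (S ⧸ E)) ⟨hinj, hsurj⟩
  refine ⟨(e.symm : (S ⧸ E) →ₐ[A] A).comp (Ideal.Quotient.mkₐ A E), fun x => ?_⟩
  obtain ⟨b, hb, hb'⟩ := hbx x
  rw [hb']
  congr 1
  exact e.symm_apply_eq.mpr hb

open Polynomial in
lemma aux_fact {A : Type*} [CommRing A] (I : Ideal A) [HenselianRing A I] (P : A[X])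
    (hP : P.Monic) (g h : (A ⧸ I)[X]) (hg : g.Monic) (hh : h.Monic) (hgh : IsCoprime g h)
    (hPgh : P.map (Ideal.Quotient.mk I) = g * h) :
    ∃ G H : A[X], G.Monic ∧ H.Monic ∧ G * H = P ∧ G.map (Ideal.Quotient.mk I) = g ∧
      H.map (Ideal.Quotient.mk I) = h := by
  have hjac := HenselianRing.jac (R := A) (I := I)
  have hloc := isLocalHom_of_le_jacobson_bot I hjac
  rcases subsingleton_or_nontrivial (A ⧸ I) with hs | hs
  · have : Subsingleton A := by
      have h0 : IsUnit (0 : A) := (isUnit_map_iff (Ideal.Quotient.mk I) 0).mp (by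
        rw [Subsingleton.elim (Ideal.Quotient.mk I 0) 1]; exact isUnit_one)
      exact isUnit_zero_iff.mp h0 |> fun h => subsingleton_of_zero_eq_one h
    exact ⟨1, 1, monic_one, monic_one, Subsingleton.elim _ _, Subsingleton.elim _ _,
      Subsingleton.elim _ _⟩
  have hn : P.natDegree = g.natDegree + h.natDegree := by
    rw [← hP.natDegree_map (Ideal.Quotient.mk I), hPgh, hg.natDegree_mul hh]
  let p : MonicDegreeEq A P.natDegree := .mk P hP rfl
  let q : MonicDegreeEq (A ⧸ I) g.natDegree × MonicDegreeEq (A ⧸ I) h.natDegree :=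
    (.mk g hg rfl, .mk h hh rfl)
  let S := UniversalFactorizationRing g.natDegree h.natDegree hn p
  let c : S := (UniversalFactorizationRing.presentation g.natDegree h.natDegree hn p).jacobian
  let φ : UniversalCoprimeFactorizationRing g.natDegree h.natDegree hn p →ₐ[A] A ⧸ I :=
    (UniversalCoprimeFactorizationRing.homEquiv (A ⧸ I) g.natDegree h.natDegree hn p).symm
      ⟨q, hPgh.symm, hgh⟩
  have hφ : (UniversalCoprimeFactorizationRing.homEquiv (A ⧸ I) g.natDegree h.natDegree hn p) φ =
      ⟨q, hPgh.symm, hgh⟩ := Equiv.apply_symm_apply _ _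
  let σ : S →ₐ[A] A ⧸ I := φ.comp (IsScalarTower.toAlgHom A S (Localization.Away c))
  have hc : IsUnit (σ c) := (IsLocalization.Away.algebraMap_isUnit (S := Localization.Away c) c).map φ
  haveI : Algebra.Etale A (Localization.Away c) :=
    inferInstanceAs (Algebra.Etale A (UniversalCoprimeFactorizationRing g.natDegree h.natDegree hn p))
  haveI : Module.Finite A S :=
    inferInstanceAs (Module.Finite A (UniversalFactorizationRing g.natDegree h.natDegree hn p))
  haveI : Algebra.FinitePresentation A S :=
    inferInstanceAs (Algebra.FinitePresentation A
      (UniversalFactorizationRing g.natDegree h.natDegree hn p))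
  obtain ⟨τ, hτ⟩ := aux_section I c σ hc
  have hτ' : (Ideal.Quotient.mk I).comp (τ : S →+* A) = (σ : S →+* A ⧸ I) := RingHom.ext hτ
  let F₁ := UniversalFactorizationRing.factor₁ g.natDegree h.natDegree hn p
  let F₂ := UniversalFactorizationRing.factor₂ g.natDegree h.natDegree hn p
  have h1 : F₁.1.map (σ : S →+* A ⧸ I) = g := congrArg (fun z => z.1.1.1) hφ
  have h2 : F₂.1.map (σ : S →+* A ⧸ I) = h := congrArg (fun z => z.1.2.1) hφ
  refine ⟨F₁.1.map (τ : S →+* A), F₂.1.map (τ : S →+* A), F₁.monic.map _, F₂.monic.map _,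
    ?_, ?_, ?_⟩
  · exact (UniversalFactorizationRing.homEquiv A g.natDegree h.natDegree hn p τ).2.trans
      (by simp [p])
  · rw [Polynomial.map_map, hτ', h1]
  · rw [Polynomial.map_map, hτ', h2]

open Polynomial in
lemma aux_idem_lift {A : Type*} [CommRing A] (I : Ideal A) [HenselianRing A I]
    {M : Type*} [AddCommGroup M] [Module A M] [Module.Finite A M] (e : Module.End A M)
    (he : ∀ x, e (e x) - e x ∈ I • (⊤ : Submodule A M)) :
    ∃ e' : Module.End A M, e' * e' = e' ∧ ∀ x, e' x - e x ∈ I • (⊤ : Submodule A M) := by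
  have hjac := HenselianRing.jac (R := A) (I := I)
  have hloc := isLocalHom_of_le_jacobson_bot I hjac
  set d : Module.End A M := aeval e (X ^ 2 - X : A[X]) with hd
  have hdx : ∀ x, d x = e (e x) - e x := fun x => by simp [hd, pow_two]
  have hdr : LinearMap.range d ≤ I • (⊤ : Submodule A M) := by
    rintro _ ⟨x, rfl⟩
    rw [hdx]; exact he x
  obtain ⟨p, hp, hpn, hpc, hpd⟩ :=
    LinearMap.exists_monic_and_natDegree_eq_and_coeff_mem_pow_and_aeval_eq_zero A d I hdr
  have hpm : p.map (Ideal.Quotient.mk I) = X ^ p.natDegree := by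
    ext i
    rw [coeff_map, coeff_X_pow]
    split_ifs with hi
    · rw [hi, hp.coeff_natDegree, map_one]
    · rcases lt_or_gt_of_ne hi with hi | hi
      · rw [Ideal.Quotient.eq_zero_iff_mem]
        refine Ideal.pow_le_self ?_ (hpc i)
        omega
      · rw [coeff_eq_zero_of_natDegree_lt hi, map_zero]
  set k := p.natDegree with hk
  set P : A[X] := (p * X).comp (X ^ 2 - X) with hPdef
  have hP : P.Monic := by
    nontriviality A
    have hx2 : (X ^ 2 - X : A[X]).natDegree = 2 := by compute_degree!
    refine (hp.mul monic_X).comp ?_ (by rw [hx2]; norm_num)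
    monicity!
  have hPm : P.map (Ideal.Quotient.mk I) = X ^ (k + 1) * (X - 1) ^ (k + 1) := by
    rw [hPdef, Polynomial.map_comp, Polynomial.map_mul, hpm]
    simp only [map_X, Polynomial.map_sub, Polynomial.map_pow, mul_comp, pow_comp, X_comp]
    rw [← mul_pow, ← pow_succ]
    congr 1
    ring
  have hcop : IsCoprime (X : (A ⧸ I)[X]) (X - 1) := ⟨1, -1, by ring⟩
  have hmon : ((X - 1 : (A ⧸ I)[X]) ^ (k + 1)).Monic := by
    have := (monic_X_sub_C (1 : A ⧸ I)).pow (k + 1)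
    rwa [C_1] at this
  obtain ⟨G, H, hG, hH, hGH, hGm, hHm⟩ := aux_fact I P hP (X ^ (k + 1)) ((X - 1) ^ (k + 1))
    (monic_X.pow _) hmon hcop.pow hPm
  have hPe : aeval e P = 0 := by
    rw [hPdef, aeval_comp, ← hd, map_mul, hpd, zero_mul]
  have hcGH : IsCoprime G H := by
    rcases subsingleton_or_nontrivial (A ⧸ I) with hs | hs
    · have h0 : IsUnit (0 : A) := (isUnit_map_iff (Ideal.Quotient.mk I) 0).mp (by
        rw [Subsingleton.elim (Ideal.Quotient.mk I 0) 1]; exact isUnit_one)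
      have : Subsingleton A := subsingleton_of_zero_eq_one (isUnit_zero_iff.mp h0)
      exact ⟨0, 0, Subsingleton.elim _ _⟩
    rw [← isUnit_resultant_iff_isCoprime hG, ← isUnit_map_iff (Ideal.Quotient.mk I),
      ← resultant_map_map, ← hG.natDegree_map (Ideal.Quotient.mk I),
      ← hH.natDegree_map (Ideal.Quotient.mk I), isUnit_resultant_iff_isCoprime (hG.map _), hGm, hHm]
    exact hcop.pow
  obtain ⟨u, v, huv⟩ := hcGH
  refine ⟨aeval e (u * G), ?_, ?_⟩
  · have h1 : aeval e (u * G) * aeval e (v * H) = 0 := by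
      rw [← map_mul, show u * G * (v * H) = u * v * P by rw [← hGH]; ring, map_mul, hPe, mul_zero]
    have h2 : v * H = 1 - u * G := by rw [← huv]; ring
    rw [h2, map_sub, map_one, mul_sub, mul_one, sub_eq_zero] at h1
    exact h1.symm
  · have hdvd : (X * (X - 1) : (A ⧸ I)[X]) ∣ (u * G - X).map (Ideal.Quotient.mk I) := by
      refine hcop.mul_dvd ?_ ?_
      · rw [Polynomial.map_sub, Polynomial.map_mul, hGm, map_X]
        exact dvd_sub (Dvd.dvd.mul_left (dvd_pow_self _ (by omega)) _) dvd_rfl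
      · have : (u * G - X : A[X]) = (1 - X) - v * H := by rw [← huv]; ring
        rw [this, Polynomial.map_sub, Polynomial.map_mul, hHm, Polynomial.map_sub, map_X,
          Polynomial.map_one]
        exact dvd_sub ⟨-1, by ring⟩ (Dvd.dvd.mul_left (dvd_pow_self _ (by omega)) _)
    obtain ⟨s, hs⟩ := hdvd
    obtain ⟨s, rfl⟩ := map_surjective (Ideal.Quotient.mk I) Ideal.Quotient.mk_surjective s
    set t : A[X] := u * G - X - (X ^ 2 - X) * s with ht
    have htm : t.map (Ideal.Quotient.mk I) = 0 := by
      rw [ht, Polynomial.map_sub, hs]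
      simp only [Polynomial.map_mul, Polynomial.map_sub, Polynomial.map_pow, map_X]
      ring
    have hte : ∀ x, aeval e t x ∈ I • (⊤ : Submodule A M) := by
      intro x
      rw [aeval_eq_sum_range, LinearMap.sum_apply]
      refine sum_mem fun i _ => ?_
      rw [LinearMap.smul_apply]
      refine Submodule.smul_mem_smul ?_ Submodule.mem_top
      rw [← Ideal.Quotient.eq_zero_iff_mem, ← coeff_map, htm, coeff_zero]
    intro x
    have hx : aeval e (u * G) x - e x = d (aeval e s x) + aeval e t x := by
      have : u * G = X + (X ^ 2 - X) * s + t := by rw [ht]; ring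
      rw [this, map_add, map_add, map_mul, aeval_X, ← hd]
      simp only [LinearMap.add_apply, Module.End.mul_apply]
      abel
    rw [hx]
    exact add_mem (hdr ⟨_, rfl⟩) (hte x)

theorem henselian_normal_decomposition
    {A : Type*} [CommRing A] (I : Ideal A) [HenselianRing A I]
    (M : Type*) [AddCommGroup M] [Module A M]
    [Module.Finite A M] [Module.Projective A M]
    (F : Submodule A M) (hIF : I • (⊤ : Submodule A M) ≤ F)
    (hfin : Module.Finite (A ⧸ I) ((A ⧸ I) ⊗[A] (M ⧸ F)))
    (hproj : Module.Projective (A ⧸ I) ((A ⧸ I) ⊗[A] (M ⧸ F))) :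
    ∃ L T : Submodule A M, IsCompl L T ∧ F = L ⊔ I • T := by
  have hzero : ∀ (N : Type _) [AddCommGroup N] [Module A N] (x : N),
      (1 : A ⧸ I) ⊗ₜ[A] x = 0 ↔ x ∈ I • (⊤ : Submodule A N) := by
    intro N _ _ x
    rw [← (TensorProduct.quotTensorEquivQuotSMul N I).map_eq_zero_iff]
    have : TensorProduct.quotTensorEquivQuotSMul N I ((1 : A ⧸ I) ⊗ₜ[A] x) =
        Submodule.Quotient.mk x := by
      simpa using TensorProduct.quotTensorEquivQuotSMul_mk_tmul (I := I) (1 : A) x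
    rw [this, Submodule.Quotient.mk_eq_zero]
  have hsurj : ∀ z : (A ⧸ I) ⊗[A] M, ∃ x : M, (1 : A ⧸ I) ⊗ₜ[A] x = z := by
    intro z
    induction z with
    | zero => exact ⟨0, by simp⟩
    | tmul a x =>
      obtain ⟨a, rfl⟩ := Ideal.Quotient.mk_surjective a
      refine ⟨a • x, ?_⟩
      rw [TensorProduct.tmul_smul, TensorProduct.smul_tmul', Algebra.smul_def, mul_one]
      rfl
    | add z w hz hw =>
      obtain ⟨x, rfl⟩ := hz
      obtain ⟨y, rfl⟩ := hw
      exact ⟨x + y, TensorProduct.tmul_add _ _ _⟩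
  let π : (A ⧸ I) ⊗[A] M →ₗ[A ⧸ I] (A ⧸ I) ⊗[A] (M ⧸ F) := F.mkQ.baseChange (A ⧸ I)
  have hπ : Function.Surjective π := LinearMap.lTensor_surjective _ F.mkQ_surjective
  obtain ⟨s, hs⟩ := Module.projective_lifting_property π LinearMap.id hπ
  have hs' : ∀ z, π (s z) = z := fun z => LinearMap.congr_fun hs z
  let ι : M →ₗ[A] (A ⧸ I) ⊗[A] M := TensorProduct.mk A (A ⧸ I) M 1
  obtain ⟨e, he⟩ := Module.projective_lifting_property ι
    ((s.restrictScalars A) ∘ₗ (π.restrictScalars A) ∘ₗ ι) hsurj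
  have he' : ∀ x, (1 : A ⧸ I) ⊗ₜ[A] e x = s (π (1 ⊗ₜ x)) := fun x => LinearMap.congr_fun he x
  obtain ⟨e', hid, hee⟩ := aux_idem_lift I e (by
    intro x
    rw [← hzero, TensorProduct.tmul_sub, he', he', hs', sub_self])
  have hid' : ∀ x, e' (e' x) = e' x := fun x => LinearMap.congr_fun hid x
  have hF1 : ∀ x ∈ F, e x ∈ I • (⊤ : Submodule A M) := by
    intro x hx
    rw [← hzero, he']
    have : π (1 ⊗ₜ x) = 0 := by
      simp [π, (Submodule.Quotient.mk_eq_zero F).mpr hx]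
    rw [this, map_zero]
  have hF2 : ∀ x, e x ∈ I • (⊤ : Submodule A M) → x ∈ F := by
    intro x hx
    rw [← hzero, he'] at hx
    have h1 : π (1 ⊗ₜ x) = 0 := by rw [← hs' (π (1 ⊗ₜ x)), hx, map_zero]
    have h2 : (1 : A ⧸ I) ⊗ₜ[A] (F.mkQ x) = 0 := h1
    have h3 : I • (⊤ : Submodule A (M ⧸ F)) = ⊥ := by
      rw [← F.range_mkQ, ← Submodule.map_top, ← Submodule.map_smul'', eq_bot_iff,
        Submodule.map_le_iff_le_comap]
      refine hIF.trans ?_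
      rw [Submodule.comap_bot, F.ker_mkQ]
    have h4 : F.mkQ x = 0 := by
      have := (TensorProduct.quotTensorEquivQuotSMul (M ⧸ F) I).map_eq_zero_iff.mpr h2
      have h5 : TensorProduct.quotTensorEquivQuotSMul (M ⧸ F) I ((1 : A ⧸ I) ⊗ₜ[A] (F.mkQ x)) =
        Submodule.Quotient.mk (F.mkQ x) := by
        simpa using TensorProduct.quotTensorEquivQuotSMul_mk_tmul (I := I) (1 : A) (F.mkQ x)
      rw [h5, Submodule.Quotient.mk_eq_zero, h3] at this
      exact this
    exact (Submodule.Quotient.mk_eq_zero F).mp h4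
  refine ⟨LinearMap.ker e', LinearMap.range e', ?_, ?_⟩
  · exact LinearMap.IsIdempotentElem.isCompl (f := e') hid |>.symm
  · apply le_antisymm
    · intro x hx
      have h1 : x = (x - e' x) + e' x := by abel
      rw [h1]
      refine add_mem (Submodule.mem_sup_left ?_) (Submodule.mem_sup_right ?_)
      · rw [LinearMap.mem_ker, map_sub, hid', sub_self]
      · have h2 : e' x ∈ I • (⊤ : Submodule A M) := by
          have := add_mem (hee x) (hF1 x hx)
          rwa [sub_add_cancel] at this
        have h3 := Submodule.mem_map_of_mem (f := e') h2
        rwa [hid', Submodule.map_smul'', Submodule.map_top] at h3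
    · refine sup_le ?_ ((Submodule.smul_mono le_rfl le_top).trans hIF)
      intro x hx
      apply hF2
      have := hee x
      rw [LinearMap.mem_ker.mp hx, zero_sub] at this
      simpa using neg_mem this
end
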